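/- Let (s_k)_{k∈ℕ₀} be a Hamburger moment sequence that is indeterminate: there exist two distinct nonnegative Borel measures σ₁ ≠ σ₂ on ℝ, each with all moments finite, such that s_k = ∫_ℝ x^k dσ₁(x) = ∫_ℝ x^k dσ₂(x) for all k ∈ ℕ₀. Let d ∈ ℕ with d ≥ 1 and let ℓ₀ be an even natural number, and let s̃_k = s_{kd+ℓ₀}. Then (s̃_k)_{k∈ℕ₀} is an indeterminate Hamburger moment sequence: there exist two distinct nonnegative Borel measures τ₁ ≠ τ₂ on ℝ, each with all moments finite, such that s̃_k = ∫_ℝ x^k dτ₁(x) = ∫_ℝ x^k dτ₂(x) for all k ∈ ℕ₀. -/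

import Mathlib

open MeasureTheory

theorem hmp_sos_aux (n : ℕ) : ∀ r : Polynomial ℝ, r.natDegree ≤ n → (∀ x, 0 ≤ r.eval x) →
    ∃ p q : Polynomial ℝ, r = p ^ 2 + q ^ 2 := by
  induction n using Nat.strong_induction_on with
  | _ n ih =>
  intro r hn hr
  by_cases hdeg : r.natDegree = 0
  · rw [Polynomial.eq_C_of_natDegree_eq_zero hdeg] at hr ⊢
    refine ⟨Polynomial.C (Real.sqrt (r.coeff 0)), 0, ?_⟩
    have := hr 0
    simp only [Polynomial.eval_C] at this
    rw [← map_pow, Real.sq_sqrt this]; simp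
  have hr0 : r ≠ 0 := by rintro rfl; simp at hdeg
  have hcont : ∀ s : Polynomial ℝ, Continuous (fun x => s.eval x) := fun s => s.continuous
  obtain ⟨z, hz⟩ := Complex.exists_root (f := r.map (algebraMap ℝ ℂ)) (by
    rw [Polynomial.degree_map]; exact Polynomial.natDegree_pos_iff_degree_pos.mp (Nat.pos_of_ne_zero hdeg))
  have hz' : Polynomial.aeval z r = 0 := by
    rwa [Polynomial.IsRoot, Polynomial.eval_map_algebraMap] at hz
  by_cases him : z.im = 0
  · have hre : r.IsRoot z.re := by
      have : z = ((z.re : ℝ) : ℂ) := by apply Complex.ext <;> simp [him]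
      rw [this] at hz'
      have h2 := Polynomial.aeval_algebraMap_apply ℂ z.re r
      simp only [Complex.coe_algebraMap] at h2
      rw [h2] at hz'
      simpa using hz'
    set a := z.re
    obtain ⟨s, hs⟩ := Polynomial.dvd_iff_isRoot.mpr hre
    have hsa : s.eval a = 0 := by
      apply le_antisymm
      · apply le_of_tendsto (((hcont s).tendsto a).mono_left (nhdsWithin_le_nhds (s := Set.Iio a)))
        filter_upwards [self_mem_nhdsWithin] with x hx
        have h1 := hr x
        rw [hs] at h1
        simp at h1
        have hx' : x < a := hx
        by_contra hh
        push Not at hh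
        nlinarith [mul_pos (sub_pos.mpr hx') hh]
      · apply ge_of_tendsto (((hcont s).tendsto a).mono_left (nhdsWithin_le_nhds (s := Set.Ioi a)))
        filter_upwards [self_mem_nhdsWithin] with x hx
        have h1 := hr x
        rw [hs] at h1
        simp at h1
        have hx' : a < x := hx
        by_contra hh
        push Not at hh
        nlinarith [mul_pos (sub_pos.mpr hx') (neg_pos.mpr hh)]
    obtain ⟨t, ht⟩ := Polynomial.dvd_iff_isRoot.mpr (show s.IsRoot a from hsa)
    have hrt : r = (Polynomial.X - Polynomial.C a) ^ 2 * t := by rw [hs, ht]; ring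
    have htn : ∀ x, x ≠ a → 0 ≤ t.eval x := by
      intro x hx
      have h1 := hr x
      rw [hrt] at h1
      simp at h1
      have : 0 < (x - a) ^ 2 := by have := sub_ne_zero.mpr hx; positivity
      exact nonneg_of_mul_nonneg_right h1 this
    have htn' : ∀ x, 0 ≤ t.eval x := by
      intro x
      by_cases hx : x = a
      · rw [hx]
        apply ge_of_tendsto (((hcont t).tendsto a).mono_left (nhdsWithin_le_nhds (s := Set.Ioi a)))
        filter_upwards [self_mem_nhdsWithin] with y hy
        exact htn y (ne_of_gt hy)
      · exact htn x hx
    have ht0 : t ≠ 0 := by rintro rfl; simp at hrt; exact hr0 hrt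
    have hd : r.natDegree = 2 + t.natDegree := by
      rw [hrt, Polynomial.natDegree_mul (pow_ne_zero _ (Polynomial.X_sub_C_ne_zero a)) ht0]
      simp
    obtain ⟨p, q, hpq⟩ := ih t.natDegree (by omega) t le_rfl htn'
    exact ⟨(Polynomial.X - Polynomial.C a) * p, (Polynomial.X - Polynomial.C a) * q, by
      rw [hrt, hpq]; ring⟩
  · obtain ⟨t, ht⟩ := Polynomial.quadratic_dvd_of_aeval_eq_zero_im_ne_zero r hz' him
    have hq : (Polynomial.X ^ 2 - Polynomial.C (2 * z.re) * Polynomial.X + Polynomial.C (‖z‖ ^ 2) : Polynomial ℝ)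
        = (Polynomial.X - Polynomial.C z.re) ^ 2 + (Polynomial.C z.im) ^ 2 := by
      rw [Complex.sq_norm, Complex.normSq_apply]
      simp only [map_mul, map_add, map_ofNat]
      ring
    rw [hq] at ht
    have htn' : ∀ x, 0 ≤ t.eval x := by
      intro x
      have h1 := hr x
      rw [ht] at h1
      simp at h1
      exact nonneg_of_mul_nonneg_right h1 (by positivity)
    have ht0 : t ≠ 0 := by rintro rfl; simp at ht; exact hr0 ht
    have hd : r.natDegree = 2 + t.natDegree := by
      have h2 : (((Polynomial.X - Polynomial.C z.re) ^ 2 + (Polynomial.C z.im) ^ 2 : Polynomial ℝ)).natDegree = 2 := by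
        rw [← map_pow, Polynomial.natDegree_add_C]; simp
      rw [ht, Polynomial.natDegree_mul (by intro h; rw [h] at h2; simp at h2) ht0, h2]
    obtain ⟨p, q, hpq⟩ := ih t.natDegree (by omega) t le_rfl htn'
    exact ⟨(Polynomial.X - Polynomial.C z.re) * p - Polynomial.C z.im * q,
      (Polynomial.X - Polynomial.C z.re) * q + Polynomial.C z.im * p, by
      rw [ht, hpq]; ring⟩

theorem hmp_sos (r : Polynomial ℝ) (hr : ∀ x, 0 ≤ r.eval x) :
    ∃ p q : Polynomial ℝ, r = p ^ 2 + q ^ 2 := hmp_sos_aux _ r le_rfl hr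

open CompactlySupported in
/-- Positive extension of a functional. -/
theorem hmp_ext (L : Polynomial ℝ →ₗ[ℝ] ℝ) (hL : ∀ r : Polynomial ℝ, (∀ x, 0 ≤ r.eval x) → 0 ≤ L r) :
    ∃ G : (Polynomial ℝ × C_c(ℝ, ℝ)) →ₗ[ℝ] ℝ, (∀ p, G (p, 0) = L p) ∧
      ∀ p f, (∀ x, 0 ≤ p.eval x + f x) → 0 ≤ G (p, f) := by
  let K : PointedCone ℝ (Polynomial ℝ × C_c(ℝ, ℝ)) :=
    { carrier := {y | ∀ x, 0 ≤ y.1.eval x + y.2 x}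
      add_mem' := by
        intro a b ha hb x
        have := ha x
        have := hb x
        simp
        linarith
      zero_mem' := by intro x; simp
      smul_mem' := by
        intro c a ha x
        have h1 := ha x
        have : 0 ≤ (c : ℝ) * (a.1.eval x + a.2 x) := mul_nonneg c.2 h1
        have h2 : (c • a).1 = (c : ℝ) • a.1 := rfl
        have h3 : (c • a).2 = (c : ℝ) • a.2 := rfl
        rw [h2, h3, Polynomial.eval_smul, CompactlySupportedContinuousMap.smul_apply, smul_eq_mul,
          smul_eq_mul]
        linarith }
  let F : (Polynomial ℝ × C_c(ℝ, ℝ)) →ₗ.[ℝ] ℝ :=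
    { domain := Submodule.prod ⊤ ⊥
      toFun := (L ∘ₗ LinearMap.fst ℝ _ _) ∘ₗ (Submodule.subtype _) }
  have h1 : ∀ x : F.domain, (x : Polynomial ℝ × C_c(ℝ, ℝ)) ∈ K → 0 ≤ F x := by
    rintro ⟨⟨p, f⟩, hx⟩ hK
    have hf : f = 0 := hx.2
    subst hf
    apply hL
    intro x
    have := hK x
    simpa using this
  have h2 : ∀ y, ∃ x : F.domain, (x : Polynomial ℝ × C_c(ℝ, ℝ)) + y ∈ K := by
    rintro ⟨p, f⟩
    obtain ⟨C, hC⟩ := f.hasCompactSupport.exists_bound_of_continuous f.continuous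
    refine ⟨⟨(-p + Polynomial.C C, 0), ⟨trivial, rfl⟩⟩, ?_⟩
    intro x
    have := hC x
    rw [Real.norm_eq_abs] at this
    have := (abs_le.mp this).1
    simp
    linarith
  obtain ⟨G, hG1, hG2⟩ := riesz_extension K F h1 h2
  refine ⟨G, fun p => hG1 ⟨(p, 0), ⟨trivial, rfl⟩⟩, fun p f h => hG2 _ h⟩

open CompactlySupported in
noncomputable def hmpCut (k n : ℕ) : C_c(ℝ, ℝ) where
  toFun x := x ^ k * max 0 (1 - x ^ 2 / (n + 1))
  continuous_toFun := by fun_prop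
  hasCompactSupport' := by
    apply HasCompactSupport.of_support_subset_isCompact (isCompact_Icc (a := -((n : ℝ) + 1)) (b := n + 1))
    intro x hx
    by_contra hh
    apply hx
    have hn : (0 : ℝ) < n + 1 := by positivity
    have : (n : ℝ) + 1 < |x| := by
      by_contra h3
      exact hh (abs_le.mp (not_lt.mp h3))
    have h4 : (n : ℝ) + 1 ≤ x ^ 2 := by
      rw [← sq_abs]; nlinarith
    have h5 : 1 ≤ x ^ 2 / (n + 1) := by rwa [le_div_iff₀ hn, one_mul]
    simp only
    rw [max_eq_left (by linarith), mul_zero]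

open CompactlySupported in
theorem hmp_hamburger (L : Polynomial ℝ →ₗ[ℝ] ℝ) (hL : ∀ r : Polynomial ℝ, (∀ x, 0 ≤ r.eval x) → 0 ≤ L r) :
    ∃ ν : Measure ℝ, (∀ k : ℕ, Integrable (fun x : ℝ => x ^ k) ν) ∧
      ∀ k : ℕ, ∫ x, x ^ k ∂ν = L (Polynomial.X ^ k) := by
  obtain ⟨G, hG1, hG2⟩ := hmp_ext L hL
  let T : C_c(ℝ, ℝ) →ₚ[ℝ] ℝ := PositiveLinearMap.mk₀ (G ∘ₗ LinearMap.inr ℝ _ _) (by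
    intro f hf
    apply hG2
    intro x
    have : 0 ≤ f x := hf x
    simpa using this)
  have hT : ∀ f, T f = G (0, f) := fun f => rfl
  set ν := RealRMK.rieszMeasure T with hν
  have hrep : ∀ f : C_c(ℝ, ℝ), ∫ x, f x ∂ν = G (0, f) := fun f => by
    rw [hν, RealRMK.integral_rieszMeasure, hT]
  have : IsFiniteMeasureOnCompacts ν := by rw [hν]; infer_instance
  have hcut : ∀ k n x, hmpCut k n x = x ^ k * max 0 (1 - x ^ 2 / (n + 1)) := fun _ _ _ => rfl
  have hbase : ∀ (n : ℕ) (x : ℝ), 0 ≤ max 0 (1 - x ^ 2 / ((n : ℝ) + 1)) ∧ max 0 (1 - x ^ 2 / ((n : ℝ) + 1)) ≤ 1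
      ∧ 1 - max 0 (1 - x ^ 2 / ((n : ℝ) + 1)) ≤ x ^ 2 / (n + 1) := by
    intro n x
    have : 0 ≤ x ^ 2 / ((n : ℝ) + 1) := by positivity
    refine ⟨le_max_left _ _, max_le (by norm_num) (by linarith), ?_⟩
    have := le_max_right 0 (1 - x ^ 2 / ((n : ℝ) + 1))
    linarith
  have hpt : ∀ k : ℕ, ∀ x : ℝ, Filter.Tendsto (fun n : ℕ => hmpCut k n x) Filter.atTop (nhds (x ^ k)) := by
    intro k x
    have h1 : Filter.Tendsto (fun n : ℕ => x ^ 2 / ((n : ℝ) + 1)) Filter.atTop (nhds 0) := by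
      apply Filter.Tendsto.div_atTop tendsto_const_nhds
      exact Filter.tendsto_atTop_add_const_right _ _ tendsto_natCast_atTop_atTop
    have h2 : Filter.Tendsto (fun n : ℕ => x ^ k * max 0 (1 - x ^ 2 / ((n : ℝ) + 1))) Filter.atTop
        (nhds (x ^ k * max 0 (1 - 0))) := (tendsto_const_nhds.max (tendsto_const_nhds.sub h1)).const_mul _
    simpa [hcut] using h2
  have hcutint : ∀ k n, Integrable (hmpCut k n) ν := fun k n =>
    (hmpCut k n).continuous.integrable_of_hasCompactSupport (hmpCut k n).hasCompactSupport
  -- even moments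
  have heven : ∀ k : ℕ, Integrable (fun x : ℝ => x ^ (2 * k)) ν := by
    intro k
    have hx0 : ∀ x : ℝ, 0 ≤ x ^ (2 * k) := fun x => by rw [pow_mul]; positivity
    refine ⟨(by fun_prop : Continuous fun x : ℝ => x ^ (2 * k)).aestronglyMeasurable, ?_⟩
    rw [hasFiniteIntegral_iff_ofReal (Filter.Eventually.of_forall hx0)]
    have hF := lintegral_liminf_le (μ := ν) (u := Filter.atTop) (f := fun (n : ℕ) x => ENNReal.ofReal (hmpCut (2 * k) n x))
      (fun n => (hmpCut (2*k) n).continuous.measurable.ennreal_ofReal)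
    have hlim : ∀ x : ℝ, Filter.liminf (fun n : ℕ => ENNReal.ofReal (hmpCut (2 * k) n x)) Filter.atTop
        = ENNReal.ofReal (x ^ (2 * k)) := fun x =>
      (ENNReal.tendsto_ofReal (hpt (2 * k) x)).liminf_eq
    simp only [hlim] at hF
    refine lt_of_le_of_lt hF ?_
    refine lt_of_le_of_lt (b := ENNReal.ofReal (L (Polynomial.X ^ (2 * k)))) ?_ ENNReal.ofReal_lt_top
    refine Filter.liminf_le_of_frequently_le' (Filter.Frequently.of_forall ?_)
    intro n
    rw [← ofReal_integral_eq_lintegral_ofReal (hcutint _ _)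
      (Filter.Eventually.of_forall fun x => by
        simp only [Pi.zero_apply, hcut]; exact mul_nonneg (hx0 x) (hbase n x).1)]
    apply ENNReal.ofReal_le_ofReal
    rw [hrep, ← hG1, ← sub_nonneg, ← map_sub]
    apply hG2
    intro x
    simp [hcut]
    have := mul_le_mul_of_nonneg_left (hbase n x).2.1 (hx0 x)
    linarith
  have habs : ∀ (k : ℕ) (x : ℝ), |x ^ k| ≤ 1 + x ^ (2 * k) := by
    intro k x
    rw [mul_comm 2 k, pow_mul, ← sq_abs (x ^ k)]
    nlinarith [sq_nonneg (|x ^ k| - 1), abs_nonneg (x ^ k)]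
  have hdom : ∀ k : ℕ, Integrable (fun x : ℝ => 1 + x ^ (2 * k)) ν := by
    intro k
    have := (heven 0).add (heven k)
    simp only [mul_zero, pow_zero] at this
    exact this
  have hall : ∀ k : ℕ, Integrable (fun x : ℝ => x ^ k) ν := by
    intro k
    exact (hdom k).mono' (by fun_prop : Continuous fun x : ℝ => x ^ k).aestronglyMeasurable
      (Filter.Eventually.of_forall fun x => by simpa using habs k x)
  refine ⟨ν, hall, fun k => ?_⟩
  have ht1 : Filter.Tendsto (fun n : ℕ => ∫ x, hmpCut k n x ∂ν) Filter.atTop (nhds (∫ x, x ^ k ∂ν)) := by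
    apply tendsto_integral_of_dominated_convergence (fun x => 1 + x ^ (2 * k))
    · exact fun n => (hmpCut k n).continuous.aestronglyMeasurable
    · exact hdom k
    · intro n
      refine Filter.Eventually.of_forall fun x => ?_
      rw [hcut, norm_mul, Real.norm_eq_abs, Real.norm_eq_abs, abs_of_nonneg (hbase n x).1]
      refine le_trans ?_ (habs k x)
      exact mul_le_of_le_one_right (abs_nonneg _) (hbase n x).2.1
    · exact Filter.Eventually.of_forall fun x => hpt k x
  refine tendsto_nhds_unique ht1 ?_
  let Q : Polynomial ℝ := Polynomial.X ^ 2 * (1 + Polynomial.X ^ (2 * k))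
  have hb : ∀ n : ℕ, |(∫ x, hmpCut k n x ∂ν) - L (Polynomial.X ^ k)| ≤ L Q / (n + 1) := by
    intro n
    have hn : (0 : ℝ) < n + 1 := by positivity
    have hLQ : L Q / (n + 1) = G ((1 / ((n : ℝ) + 1)) • Q, 0) := by
      rw [hG1, map_smul, smul_eq_mul]; ring
    have key : ∀ x : ℝ, |x ^ k - hmpCut k n x| ≤ (x ^ 2 * (1 + x ^ (2 * k))) / (n + 1) := by
      intro x
      rw [hcut, ← mul_one_sub, abs_mul, abs_of_nonneg (sub_nonneg.mpr (hbase n x).2.1)]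
      calc _ ≤ (1 + x ^ (2 * k)) * (x ^ 2 / (n + 1)) :=
            mul_le_mul (habs k x) (hbase n x).2.2 (sub_nonneg.mpr (hbase n x).2.1) ((abs_nonneg _).trans (habs k x))
        _ = _ := by ring
    rw [hrep, ← hG1, hLQ, abs_le]
    constructor
    · rw [← sub_nonneg, ← map_neg, ← map_sub, ← map_sub]
      apply hG2
      intro x
      have := (abs_le.mp (key x)).2
      simp [Q]
      rw [div_eq_inv_mul] at this
      linarith
    · rw [← sub_nonneg, ← map_sub, ← map_sub]
      apply hG2
      intro x
      have := (abs_le.mp (key x)).1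
      simp [Q]
      rw [div_eq_inv_mul] at this
      linarith
  rw [tendsto_iff_dist_tendsto_zero]
  refine squeeze_zero (g := fun n : ℕ => L Q / ((n : ℝ) + 1)) (fun _ => dist_nonneg) (fun n => hb n) ?_
  apply Filter.Tendsto.div_atTop tendsto_const_nhds
  exact Filter.tendsto_atTop_add_const_right _ _ tendsto_natCast_atTop_atTop

theorem hmp_polyInt (σ : Measure ℝ) (h : ∀ k : ℕ, Integrable (fun x : ℝ => x ^ k) σ) (q : Polynomial ℂ) :
    Integrable (fun x : ℝ => q.eval (x : ℂ)) σ := by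
  induction q using Polynomial.induction_on' with
  | add p q hp hq => simp only [Polynomial.eval_add]; exact hp.add hq
  | monomial n a =>
    have := ((h n).ofReal (𝕜 := ℂ)).const_mul a
    simpa using this

theorem hmp_polyIntR (σ : Measure ℝ) (h : ∀ k : ℕ, Integrable (fun x : ℝ => x ^ k) σ) (q : Polynomial ℝ) :
    Integrable (fun x : ℝ => q.eval x) σ := by
  induction q using Polynomial.induction_on' with
  | add p q hp hq => simp only [Polynomial.eval_add]; exact hp.add hq
  | monomial n a => simpa using (h n).const_mul a

theorem hmp_polyIntDiv (σ : Measure ℝ) (h : ∀ k : ℕ, Integrable (fun x : ℝ => x ^ k) σ) (q : Polynomial ℝ) :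
    Integrable (fun x : ℝ => q.eval x / (1 + x ^ 2)) σ := by
  refine (hmp_polyIntR σ h q).mono ?_ (Filter.Eventually.of_forall fun x => ?_)
  · refine Continuous.aestronglyMeasurable ?_
    refine q.continuous.div (by fun_prop) (fun x => by positivity)
  · rw [norm_div]
    apply div_le_self (norm_nonneg _)
    rw [Real.norm_eq_abs]
    refine le_trans ?_ (le_abs_self _)
    nlinarith [sq_nonneg x]

theorem hmp_polyEq (σ₁ σ₂ : Measure ℝ) (h₁ : ∀ k : ℕ, Integrable (fun x : ℝ => x ^ k) σ₁)
    (h₂ : ∀ k : ℕ, Integrable (fun x : ℝ => x ^ k) σ₂)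
    (he : ∀ k : ℕ, ∫ x, x ^ k ∂σ₁ = ∫ x, x ^ k ∂σ₂) (q : Polynomial ℂ) :
    ∫ x : ℝ, q.eval (x : ℂ) ∂σ₁ = ∫ x : ℝ, q.eval (x : ℂ) ∂σ₂ := by
  induction q using Polynomial.induction_on' with
  | add p q hp hq =>
    simp only [Polynomial.eval_add]
    rw [integral_add (hmp_polyInt _ h₁ _) (hmp_polyInt _ h₁ _),
      integral_add (hmp_polyInt _ h₂ _) (hmp_polyInt _ h₂ _), hp, hq]
  | monomial n a =>
    simp only [Polynomial.eval_monomial]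
    rw [integral_const_mul, integral_const_mul]
    congr 1
    have := he n
    have h3 : ∀ σ : Measure ℝ, ∫ x : ℝ, (x : ℂ) ^ n ∂σ = ((∫ x : ℝ, x ^ n ∂σ : ℝ) : ℂ) := by
      intro σ
      have := integral_ofReal (𝕜 := ℂ) (μ := σ) (f := fun x : ℝ => x ^ n)
      simpa using this
    rw [h3, h3, this]

theorem hmp_norm_sub_I (x : ℝ) : ‖(x : ℂ) - Complex.I‖ ^ 2 = 1 + x ^ 2 := by
  rw [Complex.sq_norm, Complex.normSq_apply]
  simp; ring

theorem hmp_sub_I_ne (x : ℝ) : (x : ℂ) - Complex.I ≠ 0 := by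
  intro h
  have := hmp_norm_sub_I x
  rw [h] at this
  simp at this
  nlinarith [sq_nonneg x]

open BoundedContinuousFunction in
noncomputable def hmpU : ℝ →ᵇ ℂ :=
  BoundedContinuousFunction.ofNormedAddCommGroup (fun x : ℝ => ((x : ℂ) - Complex.I)⁻¹)
    (by exact Continuous.inv₀ (by fun_prop) hmp_sub_I_ne) 1 (by
      intro x
      rw [norm_inv]
      apply inv_le_one_of_one_le₀
      have := hmp_norm_sub_I x
      by_contra h
      nlinarith [sq_nonneg x, norm_nonneg ((x : ℂ) - Complex.I)])

theorem hmpU_apply (x : ℝ) : hmpU x = ((x : ℂ) - Complex.I)⁻¹ := rfl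

theorem hmp_approx (σ₁ σ₂ : Measure ℝ) (h₁ : ∀ k : ℕ, Integrable (fun x : ℝ => x ^ k) σ₁)
    (h₂ : ∀ k : ℕ, Integrable (fun x : ℝ => x ^ k) σ₂) [IsFiniteMeasure σ₁] [IsFiniteMeasure σ₂]
    (hc : ∀ c : ℝ, 0 < c → ∃ p : Polynomial ℝ,
      (∫ x, (p ^ 2).eval x / (1 + x ^ 2) ∂σ₁) + (∫ x, (p ^ 2).eval x / (1 + x ^ 2) ∂σ₂)
        < c * ‖Polynomial.aeval Complex.I p‖ ^ 2) (ε : ℝ) (hε : 0 < ε) :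
    ∃ k : Polynomial ℂ, (∫ x : ℝ, ‖hmpU x + k.eval (x : ℂ)‖ ∂σ₁) + (∫ x : ℝ, ‖hmpU x + k.eval (x : ℂ)‖ ∂σ₂)
      ≤ ε * (σ₁.real Set.univ + σ₂.real Set.univ + 1) := by
  obtain ⟨p, hp⟩ := hc (ε ^ 2) (by positivity)
  set w := Polynomial.aeval Complex.I p with hw
  have hnn : ∀ σ : Measure ℝ, 0 ≤ ∫ x, (p ^ 2).eval x / (1 + x ^ 2) ∂σ := fun σ =>
    integral_nonneg fun x => by simp only [Polynomial.eval_pow, Pi.zero_apply]; positivity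
  have hw0 : w ≠ 0 := by
    intro h
    rw [h] at hp
    simp only [norm_zero] at hp
    have := hnn σ₁
    have := hnn σ₂
    linarith
  have hwn : 0 < ‖w‖ := norm_pos_iff.mpr hw0
  let h : Polynomial ℂ := Polynomial.C w⁻¹ * p.map (algebraMap ℝ ℂ)
  have hroot : (h - 1).IsRoot Complex.I := by
    simp [h, Polynomial.IsRoot, Polynomial.eval_map_algebraMap, ← hw, hw0]
  obtain ⟨k, hk⟩ := Polynomial.dvd_iff_isRoot.mpr hroot
  have hval : ∀ x : ℝ, hmpU x + k.eval (x : ℂ) = hmpU x * (w⁻¹ * (p.eval x : ℝ)) := by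
    intro x
    have h1 := congrArg (Polynomial.eval (x : ℂ)) hk
    have h2 : (p.map (algebraMap ℝ ℂ)).eval (x : ℂ) = ((p.eval x : ℝ) : ℂ) := by
      rw [Polynomial.eval_map_algebraMap]
      have := Polynomial.aeval_algebraMap_apply ℂ x p
      simpa using this
    simp only [h, Polynomial.eval_sub, Polynomial.eval_mul, Polynomial.eval_C, Polynomial.eval_one,
      Polynomial.eval_X, h2] at h1
    rw [hmpU_apply]
    have := hmp_sub_I_ne x
    have h3 : w⁻¹ * ((p.eval x : ℝ) : ℂ) = 1 + ((x : ℂ) - Complex.I) * k.eval (x : ℂ) := by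
      rw [← h1]; ring
    rw [h3]
    field_simp
  have hsq : ∀ x : ℝ, ‖hmpU x + k.eval (x : ℂ)‖ ^ 2 = ((p ^ 2).eval x / (1 + x ^ 2)) * (‖w‖ ^ 2)⁻¹ := by
    intro x
    rw [hval, hmpU_apply, norm_mul, norm_mul, norm_inv, norm_inv, mul_pow, mul_pow, inv_pow,
      hmp_norm_sub_I, Complex.norm_real, Real.norm_eq_abs, sq_abs, Polynomial.eval_pow]
    rw [div_eq_mul_inv, inv_pow]
    ring
  have hpt : ∀ x : ℝ, ‖hmpU x + k.eval (x : ℂ)‖ ≤ ε + ((p ^ 2).eval x / (1 + x ^ 2)) * ((‖w‖ ^ 2)⁻¹ * ε⁻¹) := by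
    intro x
    rw [← mul_assoc, ← hsq]
    set y := ‖hmpU x + k.eval (x : ℂ)‖
    have : ε * y ≤ ε * (ε + y ^ 2 * ε⁻¹) := by
      rw [mul_add]
      have : ε * (y ^ 2 * ε⁻¹) = y ^ 2 := by field_simp
      rw [this]
      nlinarith [sq_nonneg (ε - y), sq_nonneg (ε + y)]
    exact le_of_mul_le_mul_left this hε
  have hone : ∀ σ : Measure ℝ, [IsFiniteMeasure σ] → (∀ k : ℕ, Integrable (fun x : ℝ => x ^ k) σ) →
      ∫ x : ℝ, ‖hmpU x + k.eval (x : ℂ)‖ ∂σ ≤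
        ε * σ.real Set.univ + (∫ x, (p ^ 2).eval x / (1 + x ^ 2) ∂σ) * ((‖w‖ ^ 2)⁻¹ * ε⁻¹) := by
    intro σ _ hσ
    have hi1 : Integrable (fun _ : ℝ => ε) σ := integrable_const _
    have hi2 := (hmp_polyIntDiv σ hσ (p ^ 2)).mul_const ((‖w‖ ^ 2)⁻¹ * ε⁻¹)
    calc _ ≤ ∫ x : ℝ, (ε + ((p ^ 2).eval x / (1 + x ^ 2)) * ((‖w‖ ^ 2)⁻¹ * ε⁻¹)) ∂σ :=
          integral_mono (((hmpU.integrable σ).add (hmp_polyInt σ hσ k)).norm) (hi1.add hi2) hpt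
      _ = _ := by
        rw [integral_add hi1 hi2, integral_const, integral_mul_const, smul_eq_mul, mul_comm ε]
  refine ⟨k, ?_⟩
  have e1 := hone σ₁ h₁
  have e2 := hone σ₂ h₂
  have e3 := mul_le_mul_of_nonneg_right hp.le (show 0 ≤ (‖w‖ ^ 2)⁻¹ * ε⁻¹ by positivity)
  have e4 : ε ^ 2 * ‖w‖ ^ 2 * ((‖w‖ ^ 2)⁻¹ * ε⁻¹) = ε := by field_simp
  rw [e4] at e3
  linarith

open BoundedContinuousFunction in
theorem hmp_determinate (σ₁ σ₂ : Measure ℝ) (h₁ : ∀ k : ℕ, Integrable (fun x : ℝ => x ^ k) σ₁)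
    (h₂ : ∀ k : ℕ, Integrable (fun x : ℝ => x ^ k) σ₂)
    (he : ∀ k : ℕ, ∫ x, x ^ k ∂σ₁ = ∫ x, x ^ k ∂σ₂)
    (hc : ∀ c : ℝ, 0 < c → ∃ p : Polynomial ℝ,
      (∫ x, (p ^ 2).eval x / (1 + x ^ 2) ∂σ₁) + (∫ x, (p ^ 2).eval x / (1 + x ^ 2) ∂σ₂)
        < c * ‖Polynomial.aeval Complex.I p‖ ^ 2) : σ₁ = σ₂ := by
  have hfin : ∀ σ : Measure ℝ, (∀ k : ℕ, Integrable (fun x : ℝ => x ^ k) σ) → IsFiniteMeasure σ := by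
    intro σ h
    have := h 0
    simp only [pow_zero] at this
    rwa [integrable_const_iff_isFiniteMeasure one_ne_zero] at this
  have := hfin σ₁ h₁
  have := hfin σ₂ h₂
  let B : (ℝ →ᵇ ℂ) → Prop := fun f => ∀ q : Polynomial ℂ,
    ∫ x : ℝ, f x * q.eval (x : ℂ) ∂σ₁ = ∫ x : ℝ, f x * q.eval (x : ℂ) ∂σ₂
  have hI : ∀ σ : Measure ℝ, (∀ k : ℕ, Integrable (fun x : ℝ => x ^ k) σ) →
      ∀ (f : ℝ →ᵇ ℂ) (q : Polynomial ℂ), Integrable (fun x : ℝ => f x * q.eval (x : ℂ)) σ := by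
    intro σ h f q
    exact (hmp_polyInt σ h q).bdd_mul (c := ‖f‖) f.continuous.aestronglyMeasurable
      (Filter.Eventually.of_forall fun x => f.norm_coe_le_norm x)
  have hB1 : B 1 := fun q => by simpa using hmp_polyEq σ₁ σ₂ h₁ h₂ he q
  have hBstar : ∀ f, B f → B (star f) := by
    intro f hf q
    have key : ∀ σ : Measure ℝ, ∫ x : ℝ, (star f) x * q.eval (x : ℂ) ∂σ =
        (starRingEnd ℂ) (∫ x : ℝ, f x * (q.map (starRingEnd ℂ)).eval (x : ℂ) ∂σ) := by
      intro σ
      rw [← integral_conj]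
      congr 1
      ext x
      have : (q.map (starRingEnd ℂ)).eval (x : ℂ) = (starRingEnd ℂ) (q.eval (x : ℂ)) := by
        conv_lhs => rw [← Complex.conj_ofReal x]
        rw [Polynomial.eval_map_apply]
      rw [this]
      simp
    rw [key, key, hf]
  have hBU : ∀ f, B f → B (hmpU * f) := by
    intro f hf
    have hzero : ∫ x : ℝ, f x * hmpU x ∂σ₁ = ∫ x : ℝ, f x * hmpU x ∂σ₂ := by
      rw [← sub_eq_zero, ← norm_le_zero_iff]
      set M := σ₁.real Set.univ + σ₂.real Set.univ + 1 with hM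
      have hb : ∀ ε : ℝ, 0 < ε → ‖(∫ x : ℝ, f x * hmpU x ∂σ₁) - ∫ x : ℝ, f x * hmpU x ∂σ₂‖ ≤ (‖f‖ * M) * ε := by
        intro ε hε
        obtain ⟨k, hk⟩ := hmp_approx σ₁ σ₂ h₁ h₂ hc ε hε
        have hs : ∀ σ : Measure ℝ, [IsFiniteMeasure σ] → (∀ k : ℕ, Integrable (fun x : ℝ => x ^ k) σ) →
            ∫ x : ℝ, f x * hmpU x ∂σ = (∫ x : ℝ, f x * (hmpU x + k.eval (x : ℂ)) ∂σ) -
              ∫ x : ℝ, f x * k.eval (x : ℂ) ∂σ := by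
          intro σ _ hσ
          have i1 : Integrable (fun x : ℝ => f x * hmpU x) σ := (f * hmpU).integrable σ
          have := integral_add i1 (hI σ hσ f k)
          simp only [mul_add]
          rw [this]; ring
        have hn : ∀ σ : Measure ℝ, [IsFiniteMeasure σ] → (∀ k : ℕ, Integrable (fun x : ℝ => x ^ k) σ) →
            ‖∫ x : ℝ, f x * (hmpU x + k.eval (x : ℂ)) ∂σ‖ ≤ ‖f‖ * ∫ x : ℝ, ‖hmpU x + k.eval (x : ℂ)‖ ∂σ := by
          intro σ _ hσ
          rw [← integral_const_mul]
          apply norm_integral_le_of_norm_le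
          · exact (((hmpU.integrable σ).add (hmp_polyInt σ hσ k)).norm).const_mul _
          · refine Filter.Eventually.of_forall fun x => ?_
            rw [norm_mul]
            exact mul_le_mul_of_nonneg_right (f.norm_coe_le_norm x) (norm_nonneg _)
        rw [hs σ₁ h₁, hs σ₂ h₂, hf k, sub_sub_sub_cancel_right]
        refine (norm_sub_le _ _).trans ?_
        have n1 := hn σ₁ h₁
        have n2 := hn σ₂ h₂
        have n3 := mul_le_mul_of_nonneg_left hk (norm_nonneg f)
        linarith
      have ht : Filter.Tendsto (fun ε : ℝ => (‖f‖ * M) * ε) (nhdsWithin 0 (Set.Ioi 0)) (nhds 0) := by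
        have : Continuous (fun ε : ℝ => (‖f‖ * M) * ε) := by fun_prop
        have := this.tendsto 0
        simp only [mul_zero] at this
        exact this.mono_left nhdsWithin_le_nhds
      refine ge_of_tendsto ht ?_
      filter_upwards [self_mem_nhdsWithin] with ε hε
      exact hb ε hε
    intro q
    obtain ⟨q1, hq1⟩ := Polynomial.dvd_iff_isRoot.mpr
      (show (q - Polynomial.C (q.eval Complex.I)).IsRoot Complex.I by simp [Polynomial.IsRoot])
    have hv : ∀ x : ℝ, (hmpU * f) x * q.eval (x : ℂ) = f x * q1.eval (x : ℂ) +
        q.eval Complex.I * (f x * hmpU x) := by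
      intro x
      have h1 := congrArg (Polynomial.eval (x : ℂ)) hq1
      simp only [Polynomial.eval_sub, Polynomial.eval_mul, Polynomial.eval_C,
        Polynomial.eval_X] at h1
      rw [sub_eq_iff_eq_add] at h1
      rw [h1, BoundedContinuousFunction.mul_apply, hmpU_apply]
      have := hmp_sub_I_ne x
      field_simp
    simp only [hv]
    have i1 : ∀ σ : Measure ℝ, [IsFiniteMeasure σ] → Integrable (fun x : ℝ => q.eval Complex.I * (f x * hmpU x)) σ :=
      fun σ _ => ((f * hmpU).integrable σ).const_mul _
    rw [integral_add (hI σ₁ h₁ f q1) (i1 σ₁), integral_add (hI σ₂ h₂ f q1) (i1 σ₂), integral_const_mul,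
      integral_const_mul, hzero, hf q1]
  have hA : ∀ a ∈ StarAlgebra.adjoin ℂ {hmpU}, ∀ f, B f → B (a * f) := by
    intro a ha
    induction ha using StarAlgebra.adjoin_induction with
    | mem x hx => rw [Set.mem_singleton_iff] at hx; subst hx; exact hBU
    | algebraMap r =>
      intro f hf q
      have : ∀ x : ℝ, (algebraMap ℂ (ℝ →ᵇ ℂ) r * f) x * q.eval (x : ℂ) = r * (f x * q.eval (x : ℂ)) := by
        intro x
        simp [BoundedContinuousFunction.algebraMap_apply, mul_assoc]
      simp only [this]
      rw [integral_const_mul, integral_const_mul, hf q]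
    | add x y _ _ hx hy =>
      intro f hf q
      have e : ∀ t : ℝ, ((x + y) * f) t * q.eval (t : ℂ) =
        (x * f) t * q.eval (t : ℂ) + (y * f) t * q.eval (t : ℂ) := by
        intro t; simp; ring
      simp only [e]
      rw [integral_add (hI σ₁ h₁ _ q) (hI σ₁ h₁ _ q), integral_add (hI σ₂ h₂ _ q) (hI σ₂ h₂ _ q), hx f hf q, hy f hf q]
    | mul x y _ _ hx hy =>
      intro f hf
      rw [mul_assoc]
      exact hx _ (hy _ hf)
    | star x _ hx =>
      intro f hf
      have : star x * f = star (x * star f) := by rw [star_mul, star_star, mul_comm]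
      rw [this]
      exact hBstar _ (hx _ (hBstar _ hf))
  refine ext_of_forall_mem_subalgebra_integral_eq_of_pseudoEMetric_complete_countable (𝕜 := ℂ)
    (A := StarAlgebra.adjoin ℂ {hmpU}) ?_ ?_
  · intro x y hxy
    refine ⟨hmpU, ⟨_, ⟨hmpU, StarAlgebra.subset_adjoin ℂ _ rfl, rfl⟩, rfl⟩, ?_⟩
    rw [hmpU_apply, hmpU_apply]
    intro h
    have := sub_left_injective (inv_injective h)
    exact hxy (by exact_mod_cast this)
  · intro g hg
    have := hA g hg 1 hB1 1
    simpa using this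

theorem hmp_wd (σ : Measure ℝ) (g : ℝ → ℝ) (hg : Continuous g) (hg0 : ∀ x, 0 ≤ g x) (f : ℝ → ℝ)
    (hi : Integrable (fun x => f x * g x) σ) :
    Integrable f (σ.withDensity fun x => ENNReal.ofReal (g x)) ∧
      ∫ x, f x ∂(σ.withDensity fun x => ENNReal.ofReal (g x)) = ∫ x, f x * g x ∂σ := by
  have hm : Measurable fun x => ENNReal.ofReal (g x) := hg.measurable.ennreal_ofReal
  have hlt : ∀ᵐ x ∂σ, ENNReal.ofReal (g x) < ⊤ := Filter.Eventually.of_forall fun x => ENNReal.ofReal_lt_top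
  constructor
  · rw [integrable_withDensity_iff hm hlt]
    simpa [ENNReal.toReal_ofReal (hg0 _)] using hi
  · rw [integral_withDensity_eq_integral_toReal_smul hm hlt]
    congr 1
    ext x
    rw [ENNReal.toReal_ofReal (hg0 _), smul_eq_mul, mul_comm]

def HmpIndet (s : ℕ → ℝ) : Prop :=
  ∃ τ₁ τ₂ : Measure ℝ, τ₁ ≠ τ₂ ∧
      (∀ k : ℕ, Integrable (fun x : ℝ => x ^ k) τ₁) ∧
      (∀ k : ℕ, Integrable (fun x : ℝ => x ^ k) τ₂) ∧
      (∀ k : ℕ, s k = ∫ x, x ^ k ∂τ₁) ∧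
      (∀ k : ℕ, s k = ∫ x, x ^ k ∂τ₂)

theorem hmp_map (σ : Measure ℝ) (d : ℕ) (h : ∀ k : ℕ, Integrable (fun x : ℝ => x ^ k) σ) (k : ℕ) :
    Integrable (fun x : ℝ => x ^ k) (σ.map fun x => x ^ d) ∧
      ∫ x, x ^ k ∂(σ.map fun x => x ^ d) = ∫ x, x ^ (k * d) ∂σ := by
  have hm : Measurable fun x : ℝ => x ^ d := by fun_prop
  have hc : Continuous fun x : ℝ => x ^ k := by fun_prop
  constructor
  · rw [integrable_map_measure hc.aestronglyMeasurable hm.aemeasurable]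
    have := h (k * d)
    simpa only [Function.comp_def, ← pow_mul, mul_comm d k] using this
  · rw [integral_map hm.aemeasurable hc.aestronglyMeasurable]
    simp only [← pow_mul, mul_comm d k]

theorem HmpIndet.odd {s : ℕ → ℝ} (hs : HmpIndet s) {d : ℕ} (hd : Odd d) :
    HmpIndet fun k => s (k * d) := by
  obtain ⟨σ₁, σ₂, hne, h₁, h₂, m₁, m₂⟩ := hs
  have hemb : MeasurableEmbedding (fun x : ℝ => x ^ d) :=
    (by fun_prop : Continuous fun x : ℝ => x ^ d).measurableEmbedding hd.strictMono_pow.injective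
  refine ⟨σ₁.map fun x => x ^ d, σ₂.map fun x => x ^ d, ?_, fun k => (hmp_map σ₁ d h₁ k).1,
    fun k => (hmp_map σ₂ d h₂ k).1, fun k => ?_, fun k => ?_⟩
  · intro h
    apply hne
    rw [← hemb.comap_map σ₁, h, hemb.comap_map σ₂]
  · rw [(hmp_map σ₁ d h₁ k).2]; exact m₁ _
  · rw [(hmp_map σ₂ d h₂ k).2]; exact m₂ _

theorem HmpIndet.shift {s : ℕ → ℝ} (hs : HmpIndet s) {l : ℕ} (hl : Even l) :
    HmpIndet fun k => s (k + l) := by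
  obtain ⟨σ₁, σ₂, hne, h₁, h₂, m₁, m₂⟩ := hs
  have hg : Continuous fun x : ℝ => x ^ l := by fun_prop
  have hg0 : ∀ x : ℝ, 0 ≤ x ^ l := fun x => hl.pow_nonneg x
  have H : ∀ σ : Measure ℝ, (∀ k : ℕ, Integrable (fun x : ℝ => x ^ k) σ) → ∀ k : ℕ,
      Integrable (fun x : ℝ => x ^ k) (σ.withDensity fun x => ENNReal.ofReal (x ^ l)) ∧
      ∫ x, x ^ k ∂(σ.withDensity fun x => ENNReal.ofReal (x ^ l)) = ∫ x, x ^ (k + l) ∂σ := by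
    intro σ h k
    have := hmp_wd σ _ hg hg0 (fun x => x ^ k) (by simpa only [← pow_add] using h (k + l))
    simpa only [← pow_add] using this
  refine ⟨σ₁.withDensity fun x => ENNReal.ofReal (x ^ l), σ₂.withDensity fun x => ENNReal.ofReal (x ^ l),
    ?_, fun k => (H σ₁ h₁ k).1, fun k => (H σ₂ h₂ k).1, fun k => ?_, fun k => ?_⟩
  · intro heq
    apply hne
    have hfin : ∀ σ : Measure ℝ, (∀ k : ℕ, Integrable (fun x : ℝ => x ^ k) σ) → IsFiniteMeasure σ := by
      intro σ h
      have := h 0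
      simp only [pow_zero] at this
      rwa [integrable_const_iff_isFiniteMeasure one_ne_zero] at this
    have := hfin σ₁ h₁
    have := hfin σ₂ h₂
    have hm : Measurable fun x : ℝ => ENNReal.ofReal (x ^ l) := hg.measurable.ennreal_ofReal
    have hoff : ∀ A : Set ℝ, MeasurableSet A → σ₁ (A \ {0}) = σ₂ (A \ {0}) := by
      intro A hA
      have hA' : MeasurableSet (A \ {0}) := hA.diff (measurableSet_singleton 0)
      have key : ∀ σ : Measure ℝ, ∫⁻ x, (A \ {0}).indicator (fun x : ℝ => (ENNReal.ofReal (x ^ l))⁻¹) x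
          ∂(σ.withDensity fun x => ENNReal.ofReal (x ^ l)) = σ (A \ {0}) := by
        intro σ
        have hmi : Measurable fun x : ℝ => (ENNReal.ofReal (x ^ l))⁻¹ := hm.inv
        rw [lintegral_withDensity_eq_lintegral_mul _ hm (hmi.indicator hA'), ← lintegral_indicator_one hA']
        congr 1
        ext x
        by_cases hx : x ∈ A \ {0}
        · have hx0 : x ≠ 0 := hx.2
          have : 0 < x ^ l := lt_of_le_of_ne (hg0 x) (pow_ne_zero _ hx0).symm
          simp only [Pi.mul_apply, Set.indicator_of_mem hx, Pi.one_apply]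
          exact ENNReal.mul_inv_cancel (by simpa using this) ENNReal.ofReal_ne_top
        · simp only [Pi.mul_apply, Set.indicator_of_notMem hx, mul_zero]
      rw [← key, ← key, heq]
    have huniv : σ₁ Set.univ = σ₂ Set.univ := by
      have := (m₁ 0).symm.trans (m₂ 0)
      simp only [pow_zero, integral_const, smul_eq_mul, mul_one] at this
      exact (measureReal_eq_measureReal_iff).mp this
    have hz : σ₁ {0} = σ₂ {0} := by
      have e : ∀ σ : Measure ℝ, [IsFiniteMeasure σ] → σ {0} = σ Set.univ - σ (Set.univ \ {0}) := by
        intro σ _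
        rw [← measure_sdiff Set.sdiff_subset (MeasurableSet.univ.diff (measurableSet_singleton 0)).nullMeasurableSet
          (measure_ne_top _ _)]
        congr 1
        ext x; simp
      rw [e, e, huniv, hoff _ MeasurableSet.univ]
    ext A hA
    rw [← measure_sdiff_add_inter A (measurableSet_singleton (0 : ℝ)),
      ← measure_sdiff_add_inter (μ := σ₂) A (measurableSet_singleton (0 : ℝ)), hoff A hA]
    congr 1
    by_cases h0 : (0 : ℝ) ∈ A
    · rw [Set.inter_eq_right.mpr (Set.singleton_subset_iff.mpr h0), hz]
    · rw [Set.inter_singleton_eq_empty.mpr h0]; simp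
  · rw [(H σ₁ h₁ k).2]; exact m₁ _
  · rw [(H σ₂ h₂ k).2]; exact m₂ _

theorem HmpIndet.two {s : ℕ → ℝ} (hs : HmpIndet s) : HmpIndet fun k => s (k * 2) := by
  obtain ⟨σ₁, σ₂, hne, h₁, h₂, m₁, m₂⟩ := hs
  have hc : ∃ c : ℝ, 0 < c ∧ ∀ p : Polynomial ℝ, c * ‖Polynomial.aeval Complex.I p‖ ^ 2 ≤
      (∫ x, (p ^ 2).eval x / (1 + x ^ 2) ∂σ₁) + (∫ x, (p ^ 2).eval x / (1 + x ^ 2) ∂σ₂) := by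
    by_contra hh
    push Not at hh
    exact hne (hmp_determinate σ₁ σ₂ h₁ h₂ (fun k => (m₁ k).symm.trans (m₂ k)) hh)
  obtain ⟨c, hc0, hc⟩ := hc
  let J : Measure ℝ → Polynomial ℝ → ℝ := fun σ r => ∫ x, r.eval x / (1 + x ^ 2) ∂σ
  have Jadd : ∀ σ : Measure ℝ, (∀ k : ℕ, Integrable (fun x : ℝ => x ^ k) σ) → ∀ p q, J σ (p + q) = J σ p + J σ q := by
    intro σ h p q
    simp only [J]
    rw [← integral_add (hmp_polyIntDiv σ h p) (hmp_polyIntDiv σ h q)]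
    simp only [Polynomial.eval_add, add_div]
  have Jsmul : ∀ (σ : Measure ℝ) (a : ℝ) (p), J σ (a • p) = a * J σ p := by
    intro σ a p
    simp only [J]
    rw [← integral_const_mul]
    simp only [Polynomial.eval_smul, smul_eq_mul, mul_div_assoc]
  let L : Polynomial ℝ →ₗ[ℝ] ℝ :=
    { toFun := fun r => (J σ₁ r + J σ₂ r) / 2 - c / 2 * (Polynomial.aeval Complex.I r).re
      map_add' := by
        intro p q
        rw [Jadd σ₁ h₁, Jadd σ₂ h₂, map_add, Complex.add_re]
        ring
      map_smul' := by
        intro a p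
        rw [Jsmul, Jsmul, map_smul, Complex.real_smul, Complex.re_ofReal_mul]
        simp only [RingHom.id_apply, smul_eq_mul]
        ring }
  have hLdef : ∀ r, L r = (J σ₁ r + J σ₂ r) / 2 - c / 2 * (Polynomial.aeval Complex.I r).re := fun _ => rfl
  have hLsq : ∀ p, 0 ≤ L (p ^ 2) := by
    intro p
    have h := hc p
    have h2 : (Polynomial.aeval Complex.I (p ^ 2)).re ≤ ‖Polynomial.aeval Complex.I p‖ ^ 2 := by
      refine (Complex.re_le_norm _).trans ?_
      rw [map_pow, norm_pow]
    rw [hLdef]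
    simp only [J]
    nlinarith
  have hLpos : ∀ r : Polynomial ℝ, (∀ x, 0 ≤ r.eval x) → 0 ≤ L r := by
    intro r hr
    obtain ⟨p, q, rfl⟩ := hmp_sos r hr
    rw [map_add]
    exact add_nonneg (hLsq p) (hLsq q)
  obtain ⟨ν, hν1, hν2⟩ := hmp_hamburger L hLpos
  set η := ν.withDensity fun x => ENNReal.ofReal (1 + x ^ 2) with hη
  have hg : Continuous fun x : ℝ => 1 + x ^ 2 := by fun_prop
  have hg0 : ∀ x : ℝ, 0 ≤ 1 + x ^ 2 := fun x => by positivity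
  have hηm : ∀ k : ℕ, Integrable (fun x : ℝ => x ^ k) η ∧ s k = ∫ x, x ^ k ∂η := by
    intro k
    have hexp : ∀ x : ℝ, x ^ k * (1 + x ^ 2) = x ^ k + x ^ (k + 2) := fun x => by ring
    have hi : Integrable (fun x : ℝ => x ^ k * (1 + x ^ 2)) ν := by
      simp only [hexp]
      exact (hν1 k).add (hν1 (k + 2))
    have h := hmp_wd ν _ hg hg0 (fun x => x ^ k) hi
    refine ⟨h.1, ?_⟩
    rw [h.2]
    simp only [hexp]
    rw [integral_add (hν1 k) (hν1 (k + 2)), hν2, hν2, ← map_add, hLdef]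
    have hJ : ∀ σ : Measure ℝ, J σ (Polynomial.X ^ k + Polynomial.X ^ (k + 2)) = ∫ x, x ^ k ∂σ := by
      intro σ
      simp only [J]
      congr 1
      ext x
      have : (1 + x ^ 2 : ℝ) ≠ 0 := by positivity
      simp only [Polynomial.eval_add, Polynomial.eval_pow, Polynomial.eval_X, ← hexp]
      field_simp
    rw [hJ, hJ, ← m₁, ← m₂]
    simp [pow_add]
  have hη2 : ∫ x, 1 / (1 + x ^ 2) ∂η = ((∫ x, 1 / (1 + x ^ 2) ∂σ₁) + ∫ x, 1 / (1 + x ^ 2) ∂σ₂) / 2 - c / 2 := by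
    have hexp : ∀ x : ℝ, 1 / (1 + x ^ 2) * (1 + x ^ 2) = x ^ 0 := fun x => by
      have : (1 + x ^ 2 : ℝ) ≠ 0 := by positivity
      field_simp
    have h := hmp_wd ν _ hg hg0 (fun x => 1 / (1 + x ^ 2)) (by simp only [hexp]; exact hν1 0)
    rw [h.2]
    simp only [hexp]
    rw [hν2, hLdef]
    simp [J]
  have hmapint : ∀ σ : Measure ℝ, ∫ t, 1 / (1 + t) ∂(σ.map fun x : ℝ => x ^ 2) = ∫ x, 1 / (1 + x ^ 2) ∂σ := by
    intro σ
    rw [integral_map (by fun_prop) (by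
      apply Measurable.aestronglyMeasurable
      fun_prop)]
  have fin : ∀ σ : Measure ℝ, (∀ k : ℕ, Integrable (fun x : ℝ => x ^ k) σ) → (∀ k, s k = ∫ x, x ^ k ∂σ) →
      σ.map (fun x => x ^ 2) ≠ η.map (fun x => x ^ 2) → HmpIndet fun k => s (k * 2) := by
    intro σ h m hn
    refine ⟨_, _, hn, fun k => (hmp_map σ 2 h k).1, fun k => (hmp_map η 2 (fun k => (hηm k).1) k).1, fun k => ?_, fun k => ?_⟩
    · rw [(hmp_map σ 2 h k).2]; exact m _
    · rw [(hmp_map η 2 (fun k => (hηm k).1) k).2]; exact (hηm _).2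
  by_cases e1 : σ₁.map (fun x : ℝ => x ^ 2) = η.map (fun x => x ^ 2)
  · by_cases e2 : σ₂.map (fun x : ℝ => x ^ 2) = η.map (fun x => x ^ 2)
    · exfalso
      have a1 := hmapint σ₁
      have a2 := hmapint σ₂
      have a3 := hmapint η
      rw [e1] at a1
      rw [e2] at a2
      linarith
    · exact fin σ₂ h₂ m₂ e2
  · exact fin σ₁ h₁ m₁ e1

theorem HmpIndet.twoPow {s : ℕ → ℝ} (hs : HmpIndet s) (a : ℕ) : HmpIndet fun k => s (k * 2 ^ a) := by
  induction a with
  | zero => simpa using hs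
  | succ a ih =>
    have := ih.two
    simpa only [pow_succ', mul_assoc] using this

/-- If the Hamburger moment sequence `s` is indeterminate (two distinct
representing measures `σ₁ ≠ σ₂`), then for `d ≥ 1` and even `ℓ₀` the subsequence
`s̃ k = s (kd + ℓ₀)` is also an indeterminate Hamburger moment sequence. -/
theorem subsequence_indeterminate_of_indeterminate
    (s : ℕ → ℝ) (σ₁ σ₂ : Measure ℝ)
    (hrep₁ : ∀ k : ℕ, Integrable (fun x : ℝ => x ^ k) σ₁)
    (hrep₂ : ∀ k : ℕ, Integrable (fun x : ℝ => x ^ k) σ₂)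
    (hs₁ : ∀ k : ℕ, s k = ∫ x, x ^ k ∂σ₁)
    (hs₂ : ∀ k : ℕ, s k = ∫ x, x ^ k ∂σ₂)
    (hne : σ₁ ≠ σ₂)
    (d ℓ₀ : ℕ) (hd : 1 ≤ d) (hℓ₀ : Even ℓ₀) :
    ∃ τ₁ τ₂ : Measure ℝ, τ₁ ≠ τ₂ ∧
      (∀ k : ℕ, Integrable (fun x : ℝ => x ^ k) τ₁) ∧
      (∀ k : ℕ, Integrable (fun x : ℝ => x ^ k) τ₂) ∧
      (∀ k : ℕ, s (k * d + ℓ₀) = ∫ x, x ^ k ∂τ₁) ∧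
      (∀ k : ℕ, s (k * d + ℓ₀) = ∫ x, x ^ k ∂τ₂) := by
  have hs : HmpIndet s := ⟨σ₁, σ₂, hne, hrep₁, hrep₂, hs₁, hs₂⟩
  obtain ⟨a, m, hm, rfl⟩ := Nat.exists_eq_two_pow_mul_odd (n := d) (by omega)
  have h := ((hs.shift hℓ₀).twoPow a).odd hm
  have e : (fun k => s (k * m * 2 ^ a + ℓ₀)) = fun k => s (k * (2 ^ a * m) + ℓ₀) := by
    funext k
    congr 2
    ring
  have h' : HmpIndet fun k => s (k * (2 ^ a * m) + ℓ₀) := e ▸ h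
  exact h'
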